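/- arXiv:2505.02617 — 2 statements merged into one kernel-verified Lean document; each statement's English description precedes it below -/
import Mathlib

section
/- Let Ω ⊂ ℝⁿ be a bounded nonempty open set and let 1 < p < ∞, 1 < q < ∞. Then the constrained and unconstrained variational quantities coincide: inf { ‖|Du|‖_{L^p(Ω)}^p / ‖u‖_{L^q(Ω)}^p : u : ℝⁿ → ℝ Lipschitz, ‖u‖_{L^q(Ω)} > 0, ∫_Ω |u|^{q−2}u dx = 0 } = inf { ‖|Du|‖_{L^p(Ω)}^p / (inf_{c ∈ ℝ} ‖u − c‖_{L^q(Ω)})^p : u : ℝⁿ → ℝ Lipschitz, inf_{c ∈ ℝ} ‖u − c‖_{L^q(Ω)} > 0 }. -/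
open MeasureTheory

/-!
Both sets of Rayleigh quotients are equal. The point is that, for `q > 1`, the map
`c ↦ ∫_Ω |u - c|^q` is convex with derivative `-q ∫_Ω |u - c|^{q-2} (u - c)`, so the constraint
`∫_Ω |u|^{q-2} u = 0` says exactly that `c = 0` minimises it.

* If `u` satisfies the constraint, integrating the tangent-line inequality
  `|s|^q - q c |s|^{q-2} s ≤ |s - c|^q` (an instance of Young's inequality) gives
  `inf_c ‖u - c‖_q = ‖u‖_q`, so `u` contributes the same quotient to both sets.
* For any Lipschitz `u`, bounded by `M` on `Ω`, the function `c ↦ ∫_Ω |u - c|^{q-2} (u - c)` is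
  continuous on `[-M, M]`, nonnegative at `-M` and nonpositive at `M`. It therefore vanishes at
  some `c`, and `u - c` satisfies the constraint, has the same derivative as `u`, and the same
  distance to the constants.
-/

/-- Tangent-line inequality for the convex function `|·|^q` at `s`, evaluated at `s - c`. -/
lemma abs_rpow_sub_le {q : ℝ} (hq : 1 < q) (s c : ℝ) :
    |s| ^ q - q * c * (|s| ^ (q - 2) * s) ≤ |s - c| ^ q := by
  rcases eq_or_ne s 0 with rfl | hs
  · simp only [abs_zero, mul_zero, sub_zero, Real.zero_rpow (by linarith : q ≠ 0)]
    positivity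
  have hs' : 0 < |s| := abs_pos.mpr hs
  have hq1 : 0 < q - 1 := by linarith
  have hq0 : 0 < q := by linarith
  have hY := Real.young_inequality_of_nonneg (abs_nonneg (s - c))
    (by positivity : (0 : ℝ) ≤ |s| ^ (q - 1)) (Real.HolderConjugate.conjExponent hq)
  have e1 : (|s| ^ (q - 1)) ^ (q.conjExponent) = |s| ^ q := by
    rw [← Real.rpow_mul hs'.le, Real.conjExponent]
    congr 1
    field_simp
  have e2 : |s| ^ (q - 1) = |s| ^ (q - 2) * |s| := by
    rw [← Real.rpow_add_one hs'.ne']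
    congr 1
    ring
  have e3 : |s| ^ q = |s| ^ (q - 2) * s * s := by
    rw [mul_assoc, ← abs_mul_abs_self s, ← mul_assoc, ← e2, ← Real.rpow_add_one hs'.ne']
    congr 1
    ring
  rw [e1, Real.conjExponent, e2] at hY
  have h1 : |s| ^ (q - 2) * (s * (s - c)) ≤ |s - c| * (|s| ^ (q - 2) * |s|) := by
    have : s * (s - c) ≤ |s| * |s - c| := by rw [← abs_mul]; exact le_abs_self _
    calc _ ≤ |s| ^ (q - 2) * (|s| * |s - c|) := by gcongr
      _ = _ := by ring
  have h2 : q * (|s| ^ (q - 2) * (s * (s - c))) ≤ |s - c| ^ q + (q - 1) * |s| ^ q := by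
    calc _ ≤ q * (|s - c| ^ q / q + |s| ^ q / (q / (q - 1))) := by
          gcongr
          exact h1.trans hY
      _ = _ := by field_simp
  linear_combination h2 + q * e3

/-- The expression `|s|^{q-2} s` as a difference of nonnegative powers, which makes continuity at
`0` visible even when `q < 2`. -/
lemma abs_rpow_mul_eq {q : ℝ} (hq : 1 < q) (s : ℝ) :
    |s| ^ (q - 2) * s = (max s 0) ^ (q - 1) - (max (-s) 0) ^ (q - 1) := by
  have h0 : q - 1 ≠ 0 := by linarith
  rcases lt_trichotomy s 0 with h | rfl | h
  · rw [max_eq_right h.le, max_eq_left (by linarith), abs_of_neg h, Real.zero_rpow h0,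
      show q - 1 = (q - 2) + 1 by ring, Real.rpow_add_one (by linarith)]
    ring
  · simp [Real.zero_rpow h0]
  · rw [max_eq_left h.le, max_eq_right (by linarith), abs_of_pos h, Real.zero_rpow h0,
      show q - 1 = (q - 2) + 1 by ring, Real.rpow_add_one h.ne']
    ring

lemma continuous_abs_rpow_mul {q : ℝ} (hq : 1 < q) :
    Continuous fun s : ℝ => |s| ^ (q - 2) * s := by
  have h0 : 0 ≤ q - 1 := by linarith
  simp only [abs_rpow_mul_eq hq]
  exact ((continuous_id.max continuous_const).rpow_const fun _ => Or.inr h0).sub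
    ((continuous_neg.max continuous_const).rpow_const fun _ => Or.inr h0)

section

variable {n : ℕ} {Ω : Set (EuclideanSpace ℝ (Fin n))}

lemma integrableOn_of_continuous_of_isBounded (hΩb : Bornology.IsBounded Ω)
    {f : EuclideanSpace ℝ (Fin n) → ℝ} (hf : Continuous f) : IntegrableOn f Ω :=
  (hf.continuousOn.integrableOn_compact hΩb.isCompact_closure).mono_set subset_closure

/-- Under the constraint `∫_Ω |u|^{q-2} u = 0`, the constant `0` is a best `L^q` approximation. -/
lemma iInf_eq_of_constraint (hΩb : Bornology.IsBounded Ω) {q : ℝ} (hq : 1 < q)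
    {u : EuclideanSpace ℝ (Fin n) → ℝ} (hu : Continuous u)
    (h0 : (∫ x in Ω, |u x| ^ (q - 2) * u x) = 0) :
    (⨅ c : ℝ, (∫ x in Ω, |u x - c| ^ q) ^ (1 / q)) = (∫ x in Ω, |u x| ^ q) ^ (1 / q) := by
  have hq0 : 0 ≤ q := by linarith
  have hint : ∀ c : ℝ, IntegrableOn (fun x => |u x - c| ^ q) Ω := fun c =>
    integrableOn_of_continuous_of_isBounded hΩb
      ((hu.sub continuous_const).abs.rpow_const fun _ => Or.inr hq0)
  have hint0 : IntegrableOn (fun x => |u x| ^ q) Ω := by simpa using hint 0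
  have hintψ : IntegrableOn (fun x => |u x| ^ (q - 2) * u x) Ω :=
    integrableOn_of_continuous_of_isBounded hΩb ((continuous_abs_rpow_mul hq).comp hu)
  apply le_antisymm
  · refine (ciInf_le ⟨0, ?_⟩ 0).trans_eq (by simp)
    rintro _ ⟨c, rfl⟩
    exact Real.rpow_nonneg (integral_nonneg fun x => by positivity) _
  · refine le_ciInf fun c => ?_
    refine Real.rpow_le_rpow (integral_nonneg fun x => by positivity) ?_ (by positivity)
    have h := integral_mono (hint0.sub (hintψ.const_mul (q * c))) (hint c)
      fun x => abs_rpow_sub_le hq (u x) c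
    have e : ∫ x in Ω, (|u x| ^ q - q * c * (|u x| ^ (q - 2) * u x)) = ∫ x in Ω, |u x| ^ q := by
      rw [integral_sub hint0 (hintψ.const_mul (q * c)), integral_const_mul, h0, mul_zero, sub_zero]
    exact e.symm.trans_le h

/-- Some translate `u - c` satisfies the constraint, by the intermediate value theorem. -/
lemma exists_translate_constraint (hΩo : IsOpen Ω) (hΩb : Bornology.IsBounded Ω)
    {q : ℝ} (hq : 1 < q) {u : EuclideanSpace ℝ (Fin n) → ℝ} (hu : Continuous u) :
    ∃ c : ℝ, (∫ x in Ω, |u x - c| ^ (q - 2) * (u x - c)) = 0 := by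
  obtain ⟨M₀, hM₀⟩ := hΩb.isCompact_closure.exists_bound_of_continuousOn hu.continuousOn
  obtain ⟨M, hM0, hM⟩ : ∃ M : ℝ, 0 ≤ M ∧ ∀ x ∈ Ω, |u x| ≤ M :=
    ⟨max M₀ 0, le_max_right _ _, fun x hx => (hM₀ x (subset_closure hx)).trans (le_max_left _ _)⟩
  have hψ := continuous_abs_rpow_mul hq
  -- The integrand stays in the image of the compact interval `[-2M, 2M]`.
  obtain ⟨B, hB⟩ := (isCompact_Icc (a := -(2 * M)) (b := 2 * M)).exists_bound_of_continuousOn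
    hψ.continuousOn
  have hcont : ContinuousOn (fun c : ℝ => ∫ x in Ω, |u x - c| ^ (q - 2) * (u x - c))
      (Set.Icc (-M) M) := by
    refine continuousOn_of_dominated (bound := fun _ => B) ?_ ?_ ?_ ?_
    · exact fun c _ => (hψ.comp (hu.sub continuous_const)).aestronglyMeasurable
    · intro c hc
      filter_upwards [ae_restrict_mem hΩo.measurableSet] with x hx
      have := abs_le.mp (hM x hx)
      exact hB (u x - c) ⟨by linarith [hc.2], by linarith [hc.1]⟩
    · exact integrableOn_of_continuous_of_isBounded hΩb continuous_const
    · exact Filter.Eventually.of_forall fun x =>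
        (hψ.comp (continuous_const.sub continuous_id)).continuousOn
  have hlo : (∫ x in Ω, |u x - M| ^ (q - 2) * (u x - M)) ≤ 0 := by
    refine setIntegral_nonpos hΩo.measurableSet fun x hx => ?_
    have := abs_le.mp (hM x hx)
    exact mul_nonpos_of_nonneg_of_nonpos (by positivity) (by linarith)
  have hhi : 0 ≤ (∫ x in Ω, |u x - -M| ^ (q - 2) * (u x - -M)) := by
    refine setIntegral_nonneg hΩo.measurableSet fun x hx => ?_
    have := abs_le.mp (hM x hx)
    exact mul_nonneg (by positivity) (by linarith)
  obtain ⟨c, -, hc⟩ := intermediate_value_Icc' (by linarith : -M ≤ M) hcont ⟨hlo, hhi⟩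
  exact ⟨c, hc⟩

end

/-- For a bounded nonempty open `Ω ⊂ ℝⁿ` and `1 < p, q < ∞`, the constrained variational
quantity (infimum of Rayleigh quotients over Lipschitz `u` with `‖u‖_{L^q(Ω)} > 0` and
`∫_Ω |u|^{q-2} u dx = 0`) equals the unconstrained one (infimum of
`‖|Du|‖_{L^p(Ω)}^p / (inf_c ‖u - c‖_{L^q(Ω)})^p` over Lipschitz `u` with
`inf_c ‖u - c‖_{L^q(Ω)} > 0`). -/
theorem neumann_rayleigh_constrained_eq_unconstrained
    (n : ℕ) (Ω : Set (EuclideanSpace ℝ (Fin n))) (hΩo : IsOpen Ω)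
    (hΩb : Bornology.IsBounded Ω) (hΩne : Ω.Nonempty)
    (p q : ℝ) (hp : 1 < p) (hq : 1 < q) :
    sInf {t : ℝ | ∃ u : EuclideanSpace ℝ (Fin n) → ℝ, (∃ K, LipschitzWith K u) ∧
      0 < (∫ x in Ω, |u x| ^ q) ^ (1 / q) ∧
      (∫ x in Ω, |u x| ^ (q - 2) * u x) = 0 ∧
      t = ((∫ x in Ω, ‖fderiv ℝ u x‖ ^ p) ^ (1 / p)) ^ p /
          ((∫ x in Ω, |u x| ^ q) ^ (1 / q)) ^ p} =
    sInf {t : ℝ | ∃ u : EuclideanSpace ℝ (Fin n) → ℝ, (∃ K, LipschitzWith K u) ∧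
      0 < (⨅ c : ℝ, (∫ x in Ω, |u x - c| ^ q) ^ (1 / q)) ∧
      t = ((∫ x in Ω, ‖fderiv ℝ u x‖ ^ p) ^ (1 / p)) ^ p /
          (⨅ c : ℝ, (∫ x in Ω, |u x - c| ^ q) ^ (1 / q)) ^ p} := by
  congr 1
  ext t
  constructor
  · rintro ⟨u, ⟨K, hK⟩, hpos, h0, rfl⟩
    have h := iInf_eq_of_constraint hΩb hq hK.continuous h0
    exact ⟨u, ⟨K, hK⟩, by rwa [h], by rw [h]⟩
  · rintro ⟨u, ⟨K, hK⟩, hpos, rfl⟩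
    obtain ⟨c, hc⟩ := exists_translate_constraint hΩo hΩb hq hK.continuous
    have hv : LipschitzWith K fun x => u x - c :=
      LipschitzWith.of_dist_le_mul fun x y => by simpa using hK.dist_le_mul x y
    have h := iInf_eq_of_constraint hΩb hq hv.continuous hc
    have hshift : (⨅ d : ℝ, (∫ x in Ω, |u x - c - d| ^ q) ^ (1 / q)) =
        ⨅ d : ℝ, (∫ x in Ω, |u x - d| ^ q) ^ (1 / q) := by
      simp only [sub_sub]
      exact (Equiv.addLeft c).iInf_comp (g := fun d : ℝ => (∫ x in Ω, |u x - d| ^ q) ^ (1 / q))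
    rw [hshift] at h
    refine ⟨fun x => u x - c, ⟨K, hv⟩, by rwa [← h], hc, ?_⟩
    rw [h]
    simp only [fderiv_sub_const]
end

section
/- Let Ω ⊆ Ω̃ ⊂ ℝⁿ be bounded nonempty open sets, let 1 < p < ∞, 1 < q < ∞, and let K > 0. For a bounded open set U ⊂ ℝⁿ define λ_{p,q}(U) = inf { ‖|Du|‖_{L^p(U)}^p / (inf_{c ∈ ℝ} ‖u − c‖_{L^q(U)})^p : u : ℝⁿ → ℝ Lipschitz, inf_{c ∈ ℝ} ‖u − c‖_{L^q(U)} > 0 }. Suppose that for every Lipschitz function u : ℝⁿ → ℝ there exists a Lipschitz function v : ℝⁿ → ℝ with v = u on Ω and ‖|Dv|‖_{L^p(Ω̃)} ≤ K ‖|Du|‖_{L^p(Ω)}. Then λ_{p,q}(Ω̃) ≤ K^p · λ_{p,q}(Ω). -/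
/-!
The extension `v` of a Lipschitz function `u` has `inf_c ‖v - c‖_{L^q(Ω')} ≥ inf_c ‖u - c‖_{L^q(Ω)}`,
since enlarging the domain increases every `‖· - c‖_{L^q}` (`oscillation_mono`). Hence `v` is
admissible on `Ω'` whenever `u` is admissible on `Ω`, and its quotient is at most `K ^ p` times that
of `u`. Taking the infimum over `u` gives the claim.

As the infimum is that of a set of reals, the empty set must be treated separately. In positive
dimension an admissible `u` exists: `x ↦ dist x x₀` is nonconstant on the open set `Ω`, and a
nonconstant continuous function has positive oscillation (`oscillation_pos`). In dimension `0`
nothing is admissible and both eigenvalues take the value `sInf ∅ = 0`.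
-/

open MeasureTheory

/-- The first nontrivial variational Neumann `(p,q)`-eigenvalue of a bounded open
`U ⊂ ℝⁿ`: the infimum of `‖|Du|‖_{L^p(U)}^p / (inf_c ‖u - c‖_{L^q(U)})^p` over Lipschitz
`u : ℝⁿ → ℝ` with `inf_c ‖u - c‖_{L^q(U)} > 0`. -/
noncomputable def neumannEigenvalue (n : ℕ) (p q : ℝ)
    (U : Set (EuclideanSpace ℝ (Fin n))) : ℝ :=
  sInf {t : ℝ | ∃ u : EuclideanSpace ℝ (Fin n) → ℝ, (∃ K, LipschitzWith K u) ∧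
    0 < (⨅ c : ℝ, (∫ x in U, |u x - c| ^ q) ^ (1 / q)) ∧
    t = ((∫ x in U, ‖fderiv ℝ u x‖ ^ p) ^ (1 / p)) ^ p /
        (⨅ c : ℝ, (∫ x in U, |u x - c| ^ q) ^ (1 / q)) ^ p}

section Oscillation

variable {n : ℕ} {q : ℝ} {U V : Set (EuclideanSpace ℝ (Fin n))}
  {u v : EuclideanSpace ℝ (Fin n) → ℝ}

lemma integrableOn_abs_sub_rpow (hU : Bornology.IsBounded U) (hu : Continuous u) (hq : 0 ≤ q)
    (c : ℝ) : IntegrableOn (fun x => |u x - c| ^ q) U := by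
  have hc : Continuous fun x => |u x - c| ^ q :=
    ((hu.sub continuous_const).abs).rpow_const fun _ => Or.inr hq
  exact (hc.continuousOn.integrableOn_compact hU.isCompact_closure).mono_set subset_closure

lemma bddBelow_oscillation (q : ℝ) (U : Set (EuclideanSpace ℝ (Fin n)))
    (u : EuclideanSpace ℝ (Fin n) → ℝ) :
    BddBelow (Set.range fun c : ℝ => (∫ x in U, |u x - c| ^ q) ^ (1 / q)) := by
  refine ⟨0, ?_⟩
  rintro _ ⟨c, rfl⟩
  positivity

lemma oscillation_mono (hUV : U ⊆ V) (hU : MeasurableSet U) (hV : Bornology.IsBounded V)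
    (hv : Continuous v) (huv : Set.EqOn v u U) (hq : 0 < q) :
    (⨅ c : ℝ, (∫ x in U, |u x - c| ^ q) ^ (1 / q)) ≤
      ⨅ c : ℝ, (∫ x in V, |v x - c| ^ q) ^ (1 / q) := by
  refine ciInf_mono (bddBelow_oscillation q U u) fun c => ?_
  have h : ∫ x in U, |u x - c| ^ q = ∫ x in U, |v x - c| ^ q :=
    setIntegral_congr_fun hU fun x hx => by simp only [huv hx]
  rw [h]
  refine Real.rpow_le_rpow (by positivity) ?_ (by positivity)
  exact setIntegral_mono_set (integrableOn_abs_sub_rpow hV hv hq.le c)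
    (Filter.Eventually.of_forall fun x => by positivity) hUV.eventuallyLE

/-- Chebyshev-type bound: if `|u - c| ≥ d` on `A ⊆ U`, then
`‖u - c‖_{L^q(U)} ≥ (d ^ q * |A|) ^ (1 / q)`. -/
lemma le_setIntegral_abs_sub_rpow {A : Set (EuclideanSpace ℝ (Fin n))} (hA : MeasurableSet A)
    (hAU : A ⊆ U) (hU : Bornology.IsBounded U) (hu : Continuous u) (hq : 0 < q) {c d : ℝ}
    (hd : 0 ≤ d) (h : ∀ x ∈ A, d ≤ |u x - c|) :
    (d ^ q * volume.real A) ^ (1 / q) ≤ (∫ x in U, |u x - c| ^ q) ^ (1 / q) := by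
  have hint := integrableOn_abs_sub_rpow hU hu hq.le c
  refine Real.rpow_le_rpow (by positivity) ?_ (by positivity)
  calc d ^ q * volume.real A ≤ ∫ x in A, |u x - c| ^ q :=
        setIntegral_ge_of_const_le_real hA (hU.subset hAU).measure_lt_top.ne
          (fun x hx => Real.rpow_le_rpow hd (h x hx) hq.le) (hint.mono_set hAU)
    _ ≤ ∫ x in U, |u x - c| ^ q :=
        setIntegral_mono_set hint (Filter.Eventually.of_forall fun x => by positivity)
          hAU.eventuallyLE

/-- A continuous function which is not constant on `U` stays away from all constants in `L^q(U)`: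
with `m` the midpoint of two of its values, no `c` is close both to the values below `m` and to
those above `m`, and each of these two ranges is taken on a nonempty open set. -/
lemma oscillation_pos (hUo : IsOpen U) (hU : Bornology.IsBounded U) (hu : Continuous u)
    (hq : 0 < q) {y z : EuclideanSpace ℝ (Fin n)} (hy : y ∈ U) (hz : z ∈ U) (hyz : u y < u z) :
    0 < ⨅ c : ℝ, (∫ x in U, |u x - c| ^ q) ^ (1 / q) := by
  obtain ⟨m, d, hd, hym, hzm⟩ : ∃ m d : ℝ, 0 < d ∧ u y < m - d ∧ m + d < u z :=
    ⟨(u y + u z) / 2, (u z - u y) / 4, by linarith, by linarith, by linarith⟩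
  have hAo : IsOpen (U ∩ {x | u x < m - d}) := hUo.inter (isOpen_lt hu continuous_const)
  have hBo : IsOpen (U ∩ {x | m + d < u x}) := hUo.inter (isOpen_lt continuous_const hu)
  have key : ∀ A : Set (EuclideanSpace ℝ (Fin n)), IsOpen A → A.Nonempty → A ⊆ U →
      0 < (d ^ q * volume.real A) ^ (1 / q) := fun A hAo hAne hAU => by
    have : 0 < volume.real A :=
      ENNReal.toReal_pos (hAo.measure_pos volume hAne).ne' (hU.subset hAU).measure_lt_top.ne
    positivity
  refine lt_of_lt_of_le (lt_min (key _ hAo ⟨y, hy, hym⟩ Set.inter_subset_left)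
    (key _ hBo ⟨z, hz, hzm⟩ Set.inter_subset_left)) (le_ciInf fun c => ?_)
  rcases le_total m c with hc | hc
  · refine (min_le_left _ _).trans (le_setIntegral_abs_sub_rpow hAo.measurableSet
      Set.inter_subset_left hU hu hq hd.le fun x hx => ?_)
    have hx' : u x < m - d := hx.2
    exact le_abs.2 (Or.inr (by linarith))
  · refine (min_le_right _ _).trans (le_setIntegral_abs_sub_rpow hBo.measurableSet
      Set.inter_subset_left hU hu hq hd.le fun x hx => ?_)
    have hx' : m + d < u x := hx.2
    exact le_abs.2 (Or.inl (by linarith))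

lemma oscillation_nonpos_of_subsingleton [Subsingleton (EuclideanSpace ℝ (Fin n))] (hq : 0 < q) :
    (⨅ c : ℝ, (∫ x in U, |u x - c| ^ q) ^ (1 / q)) ≤ 0 := by
  refine (ciInf_le (bddBelow_oscillation q U u) (u 0)).trans_eq ?_
  have h : ∀ x, |u x - u 0| ^ q = 0 := fun x => by
    rw [Subsingleton.elim x 0, sub_self, abs_zero, Real.zero_rpow hq.ne']
  simp only [h, integral_zero]
  exact Real.zero_rpow (by positivity)

end Oscillation

/-- If `Ω ⊆ Ω̃` are bounded nonempty open subsets of `ℝⁿ`, and every Lipschitz `u : ℝⁿ → ℝ`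
admits a Lipschitz extension-from-`Ω` `v` with `‖|Dv|‖_{L^p(Ω̃)} ≤ K ‖|Du|‖_{L^p(Ω)}`, then
`λ_{p,q}(Ω̃) ≤ K^p λ_{p,q}(Ω)`. -/
theorem neumann_eigenvalue_le_of_extension
    (n : ℕ) (Ω Ω' : Set (EuclideanSpace ℝ (Fin n))) (hsub : Ω ⊆ Ω')
    (hΩo : IsOpen Ω) (hΩb : Bornology.IsBounded Ω) (hΩne : Ω.Nonempty)
    (hΩ'o : IsOpen Ω') (hΩ'b : Bornology.IsBounded Ω') (hΩ'ne : Ω'.Nonempty)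
    (p q : ℝ) (hp : 1 < p) (hq : 1 < q) (K : ℝ) (hK : 0 < K)
    (hext : ∀ u : EuclideanSpace ℝ (Fin n) → ℝ, (∃ L, LipschitzWith L u) →
      ∃ v : EuclideanSpace ℝ (Fin n) → ℝ, (∃ L, LipschitzWith L v) ∧
        Set.EqOn v u Ω ∧
        (∫ x in Ω', ‖fderiv ℝ v x‖ ^ p) ^ (1 / p) ≤
          K * (∫ x in Ω, ‖fderiv ℝ u x‖ ^ p) ^ (1 / p)) :
    neumannEigenvalue n p q Ω' ≤ K ^ p * neumannEigenvalue n p q Ω := by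
  have hp0 : 0 < p := by linarith
  have hq0 : 0 < q := by linarith
  have hKp : 0 < K ^ p := Real.rpow_pos_of_pos hK p
  unfold neumannEigenvalue
  rcases subsingleton_or_nontrivial (EuclideanSpace ℝ (Fin n)) with hs | hs
  · have hempty : ∀ (U : Set (EuclideanSpace ℝ (Fin n))) (u : EuclideanSpace ℝ (Fin n) → ℝ),
        ¬ 0 < (⨅ c : ℝ, (∫ x in U, |u x - c| ^ q) ^ (1 / q)) := fun U u =>
      (oscillation_nonpos_of_subsingleton hq0).not_gt
    simp only [hempty, false_and, and_false, exists_false, Set.ofPred_false, Real.sInf_empty,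
      mul_zero, le_refl]
  rw [← div_le_iff₀' hKp]
  refine le_csInf ?_ ?_
  · obtain ⟨x₀, hx₀⟩ := hΩne
    have := Module.punctured_nhds_neBot ℝ (EuclideanSpace ℝ (Fin n)) x₀
    obtain ⟨z, hz, hne⟩ :=
      (infinite_of_mem_nhds x₀ (hΩo.mem_nhds hx₀)).nontrivial.exists_ne x₀
    have hlip : LipschitzWith 1 fun x : EuclideanSpace ℝ (Fin n) => dist x x₀ :=
      LipschitzWith.dist_left x₀
    exact ⟨_, _, ⟨1, hlip⟩, oscillation_pos hΩo hΩb hlip.continuous hq0 hx₀ hz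
      (by simpa using hne), rfl⟩
  · rintro t ⟨u, hu, hpos, rfl⟩
    obtain ⟨v, ⟨L, hv⟩, heq, hle⟩ := hext u hu
    have hosc := oscillation_mono hsub hΩo.measurableSet hΩ'b hv.continuous heq hq0
    rw [div_le_iff₀' hKp, ← mul_div_assoc, ← Real.mul_rpow hK.le (by positivity)]
    refine le_trans (csInf_le ⟨0, ?_⟩ ⟨v, ⟨L, hv⟩, hpos.trans_le hosc, rfl⟩) ?_
    · rintro _ ⟨w, -, hw, rfl⟩
      positivity
    · exact div_le_div₀ (by positivity)
        (Real.rpow_le_rpow (by positivity) hle hp0.le) (Real.rpow_pos_of_pos hpos p)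
        (Real.rpow_le_rpow hpos.le hosc hp0.le)
end
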